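/- Let (X,T) be a strictly ergodic topological dynamical system with unique invariant Borel probability measure μ, and let π : (X,T) → (Y,T) be a distal extension. Let ν = π_*μ and let μ = ∫_Y μ_y dν(y) be the disintegration of μ over ν. Then there is a set Y₀ ⊆ Y with ν(Y₀) = 1 such that for every y ∈ Y₀, supp(μ_y) = π^{-1}(y). -/

import Mathlib

/-!
Write `R_π` for the relation `{(x, x') : π x = π x'}`. A closed `T`-invariant equivalence
relation `R ⊆ R_π` is called full (`FullMod`) if, for almost every `y`, every point of `π⁻¹(y)`
is `R`-related to a point of `supp μ_y`. The relation `R_π` is full because `μ_y` is carried by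
`π⁻¹(y)`, and the theorem says that the diagonal is full.

Fullness passes to intersections of chains (`FullMod.sInter`), so Zorn's lemma gives a minimal
full relation `R`. For any `R` let `derived T R` be the relative regionally proximal relation
`⋂_ε closure {(x, x') ∈ R : inf_n dist (T^n x) (T^n x') < ε}`. Three facts finish the proof.

* `derived T R` is again a closed invariant equivalence relation (`isICER_derived`). Only
  transitivity is not immediate. It uses distality through the enveloping semigroup: each of its
  elements is left invertible on every fibre of `π` (`exists_left_inverse`), whence the first
  projection of a closed invariant subrelation of `R_π` is open (`eventually_exists_lift`) and
  closeness along the orbit satisfies a weak triangle inequality (`exists_near_trans`). Baire's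
  theorem then makes it possible to approximate pairs of `derived T R` with the first coordinate
  held fixed, for a dense set of first coordinates (`exists_dense_derived`).
* If `R` is full, so is `derived T R` (`FullMod.derived`). Almost every `x` lies in the support
  of the measure on its own fibre; let `X₀` be the invariant set of full measure of points all of
  whose iterates do so. By unique ergodicity, for almost every `x` each point of the `R`-class of
  `x` comes arbitrarily close, along the orbit, to a point of the same class in `X₀`
  (`ae_exists_near`). Openness of the first projection of `R` and compactness of `supp μ_y`
  spread this from almost every point to all points of the fibre.
* If `R = derived T R`, then by Baire's theorem the proximal pairs are dense in `R`, and they are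
  diagonal by distality, so `R` is the diagonal (`eq_of_mem_of_derived_eq`).

By minimality `R = derived T R`, so the diagonal is full.
-/

open MeasureTheory

/-- A system is minimal if every (full) orbit is dense. -/
def IsMinimal {X : Type*} [TopologicalSpace X] (T : Equiv.Perm X) : Prop :=
  ∀ x : X, Dense (Set.range fun n : ℤ => (T ^ n) x)

/-- `(x, y)` is a proximal pair: `inf_{n ∈ ℤ} dist (T^n x) (T^n y) = 0`. -/
def Proximal {X : Type*} [MetricSpace X] (T : Equiv.Perm X) (x y : X) : Prop :=
  ∀ ε : ℝ, 0 < ε → ∃ n : ℤ, dist ((T ^ n) x) ((T ^ n) y) < ε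

namespace FiberSupport

open Set Filter Topology

/-! ### The enveloping semigroup of a distal extension -/

section Topological

variable {X Y : Type*} [MetricSpace X]

/-- The (Ellis) enveloping semigroup: the pointwise closure of the powers of `T` in `X → X`. -/
def ellis (T : Equiv.Perm X) : Set (X → X) := closure (range fun n : ℤ => ⇑(T ^ n))

/-- Invariance of a relation under all powers of `T × T`. -/
def IsInv (T : Equiv.Perm X) (N : Set (X × X)) : Prop :=
  ∀ x y, (x, y) ∈ N → ∀ n : ℤ, ((T ^ n) x, (T ^ n) y) ∈ N

/-- `Near T ε x y` says that some iterate of `T` brings `x` and `y` to within `ε`, that is,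
`inf_n dist (T^n x) (T^n y) < ε`. -/
def Near (T : Equiv.Perm X) (ε : ℝ) (x y : X) : Prop :=
  ∃ n : ℤ, dist ((T ^ n) x) ((T ^ n) y) < ε

variable {T : Equiv.Perm X}

lemma continuous_zpow (hT : Continuous T) (hT' : Continuous T.symm) (n : ℤ) :
    Continuous ⇑(T ^ n) := by
  have hpow : ∀ (f : Equiv.Perm X), Continuous f → ∀ k : ℕ, Continuous ⇑(f ^ k) := by
    intro f hf k
    rw [Equiv.Perm.coe_pow]
    exact hf.iterate k
  cases n with
  | ofNat k => simpa using hpow T hT k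
  | negSucc k =>
    rw [zpow_negSucc, ← inv_pow]
    exact hpow T⁻¹ hT' (k + 1)

lemma zpow_add_apply {X : Type*} {T : Equiv.Perm X} (m n : ℤ) (x : X) :
    (T ^ (m + n)) x = (T ^ m) ((T ^ n) x) := by
  rw [zpow_add, Equiv.Perm.mul_apply]

lemma zpow_mem_ellis (n : ℤ) : ⇑(T ^ n) ∈ ellis T := subset_closure ⟨n, rfl⟩

lemma exists_zpow_of_mem_ellis {p : X → X} (hp : p ∈ ellis T) {O : Set (X → X)}
    (hO : IsOpen O) (hpO : p ∈ O) : ∃ n : ℤ, ⇑(T ^ n) ∈ O := by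
  obtain ⟨_, h, n, rfl⟩ := mem_closure_iff.1 hp O hO hpO
  exact ⟨n, h⟩

lemma isCompact_ellis [CompactSpace X] : IsCompact (ellis T) := isClosed_closure.isCompact

lemma comp_mem_ellis (hc : ∀ n : ℤ, Continuous ⇑(T ^ n)) {p q : X → X} (hp : p ∈ ellis T)
    (hq : q ∈ ellis T) : p ∘ q ∈ ellis T := by
  have h1 : ∀ m : ℤ, ∀ q ∈ ellis T, ⇑(T ^ m) ∘ q ∈ ellis T := by
    intro m q hq
    have hcont : Continuous fun q : X → X => ⇑(T ^ m) ∘ q :=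
      continuous_pi fun x => (hc m).comp (continuous_apply x)
    have hcl : IsClosed ((fun q : X → X => ⇑(T ^ m) ∘ q) ⁻¹' ellis T) :=
      isClosed_closure.preimage hcont
    refine closure_minimal ?_ hcl hq
    rintro _ ⟨n, rfl⟩
    have : ⇑(T ^ m) ∘ ⇑(T ^ n) = ⇑(T ^ (m + n)) := by
      ext x; simp [zpow_add_apply]
    simp only [mem_preimage, this]
    exact zpow_mem_ellis _
  have hcont : Continuous fun p : X → X => p ∘ q :=
    continuous_pi fun x => continuous_apply (q x)
  have hcl : IsClosed ((fun p : X → X => p ∘ q) ⁻¹' ellis T) := isClosed_closure.preimage hcont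
  refine closure_minimal ?_ hcl hp
  rintro _ ⟨n, rfl⟩
  exact h1 n q hq

lemma ellis_mem_of_isInv {N : Set (X × X)} (hN : IsClosed N) (hinv : IsInv T N) {p : X → X}
    (hp : p ∈ ellis T) {x y : X} (h : (x, y) ∈ N) : (p x, p y) ∈ N := by
  have hcont : Continuous fun p : X → X => (p x, p y) :=
    (continuous_apply x).prodMk (continuous_apply y)
  refine closure_minimal ?_ (hN.preimage hcont) hp
  rintro _ ⟨n, rfl⟩
  exact hinv x y h n

lemma exists_ellis_apply_eq [CompactSpace X] (hmin : IsMinimal T) (x z : X) :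
    ∃ p ∈ ellis T, p x = z := by
  have hcl : IsClosed ((fun p : X → X => p x) '' ellis T) :=
    (isCompact_ellis.image (continuous_apply x)).isClosed
  have : z ∈ (fun p : X → X => p x) '' ellis T := by
    refine closure_minimal ?_ hcl (hmin x z)
    rintro _ ⟨n, rfl⟩
    exact ⟨_, zpow_mem_ellis n, rfl⟩
  exact this

lemma proximal_of_ellis_eq {p : X → X} (hp : p ∈ ellis T) {x y : X} (h : p x = p y) :
    Proximal T x y := by
  intro ε hε
  have hO : IsOpen {q : X → X | dist (q x) (q y) < ε} :=
    isOpen_lt ((continuous_apply x).dist (continuous_apply y)) continuous_const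
  exact exists_zpow_of_mem_ellis hp hO (by simpa [h] using hε)

/-- The relation `{(x, y) : π x = π y}`. -/
def fiberRel (π : X → Y) : Set (X × X) := {z | π z.1 = π z.2}

/-- Distality makes each element of the enveloping semigroup left invertible on every fibre:
an idempotent of the left ideal `E p` fixing `x` must fix the whole fibre of `x`. -/
lemma exists_left_inverse [CompactSpace X] (hc : ∀ n : ℤ, Continuous ⇑(T ^ n))
    (hmin : IsMinimal T) {π : X → Y} (hcl : IsClosed (fiberRel π)) (hinv : IsInv T (fiberRel π))
    (hdistal : ∀ x y : X, π x = π y → Proximal T x y → x = y)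
    {p : X → X} (hp : p ∈ ellis T) (x : X) :
    ∃ q ∈ ellis T, ∀ x', π x' = π x → q (p x') = x' := by
  let I : Semigroup (X → X) := { mul := fun f g => f ∘ g, mul_assoc := fun _ _ _ => rfl }
  have hcomp : Continuous fun q : X → X => q ∘ p :=
    continuous_pi fun x => continuous_apply (p x)
  let s : Set (X → X) := ((fun q : X → X => q ∘ p) '' ellis T) ∩ {f | f x = x}
  have hs : IsCompact s :=
    (isCompact_ellis.image hcomp).inter_right
      (isClosed_eq (continuous_apply x) continuous_const)
  have hne : s.Nonempty := by
    obtain ⟨q, hq, hqx⟩ := exists_ellis_apply_eq hmin (p x) x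
    exact ⟨q ∘ p, ⟨q, hq, rfl⟩, hqx⟩
  obtain ⟨v, ⟨⟨q, hq, rfl⟩, hvx⟩, hvv⟩ :=
    exists_idempotent_in_compact_subsemigroup (M := X → X)
      (fun r => continuous_pi fun x => continuous_apply (r x)) s hne hs (by
        rintro _ ⟨⟨q₁, h₁, rfl⟩, hx₁⟩ _ ⟨⟨q₂, h₂, rfl⟩, hx₂⟩
        refine ⟨⟨q₁ ∘ p ∘ q₂, comp_mem_ellis hc h₁ (comp_mem_ellis hc hp h₂), rfl⟩, ?_⟩
        change q₁ (p (q₂ (p x))) = x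
        simp only [mem_ofPred_eq, Function.comp] at hx₁ hx₂
        rw [hx₂, hx₁])
  have hv : q ∘ p ∈ ellis T := comp_mem_ellis hc hq hp
  refine ⟨q, hq, fun x' hx' => ?_⟩
  have h1 : π (q (p x')) = π (q (p x)) := ellis_mem_of_isInv hcl hinv hv (x := x') (y := x) hx'
  have h2 : q (p x) = x := hvx
  have h3 : q (p (q (p x'))) = q (p x') := congrFun hvv x'
  exact hdistal _ _ (by rw [h1, h2, hx']) (proximal_of_ellis_eq hv h3)

/-- The first projection of a closed invariant subrelation of `fiberRel π` is an open map:
nearby first coordinates can be completed to nearby pairs of the relation.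

By minimality points `a` tending to `x` have the form `P_a x` with `P_a` in the enveloping
semigroup; a limit `r` of the `P_a` fixes `x`, hence is invertible on the fibre of `x`, with some
inverse `q`, and the pairs `P_a (x, q x')` converge to `(x, x')`. -/
lemma eventually_exists_lift [CompactSpace X] (hc : ∀ n : ℤ, Continuous ⇑(T ^ n))
    (hmin : IsMinimal T) {π : X → Y} (hcl : IsClosed (fiberRel π)) (hinv : IsInv T (fiberRel π))
    (hdistal : ∀ x y : X, π x = π y → Proximal T x y → x = y)
    {N : Set (X × X)} (hN : IsClosed N) (hNinv : IsInv T N) (hNπ : N ⊆ fiberRel π)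
    {x x' : X} (hx : (x, x') ∈ N) {W : Set (X × X)} (hW : IsOpen W) (hxW : (x, x') ∈ W) :
    ∀ᶠ a in 𝓝 x, ∃ b, (a, b) ∈ N ∧ (a, b) ∈ W := by
  by_contra hcon
  have hfr : ∃ᶠ a in 𝓝 x, a ∈ {a | ¬ ∃ b, (a, b) ∈ N ∧ (a, b) ∈ W} :=
    not_eventually.1 hcon
  rw [frequently_mem_iff_neBot] at hfr
  let 𝒰 := Ultrafilter.of (𝓝 x ⊓ 𝓟 {a | ¬ ∃ b, (a, b) ∈ N ∧ (a, b) ∈ W})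
  have hle := Ultrafilter.of_le (𝓝 x ⊓ 𝓟 {a | ¬ ∃ b, (a, b) ∈ N ∧ (a, b) ∈ W})
  have hUx : (𝒰 : Filter X) ≤ 𝓝 x := hle.trans inf_le_left
  have hUA : ∀ᶠ a in (𝒰 : Filter X), ¬ ∃ b, (a, b) ∈ N ∧ (a, b) ∈ W :=
    le_principal_iff.1 (hle.trans inf_le_right)
  choose P hP hPx using exists_ellis_apply_eq hmin x
  obtain ⟨r, hr, hlim⟩ := (isCompact_ellis (T := T)).ultrafilter_le_nhds (𝒰.map P)
    (le_principal_iff.2 (Filter.mem_map.2 (Filter.univ_mem' hP)))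
  have hlim' : Tendsto P (𝒰 : Filter X) (𝓝 r) := hlim
  have hev : ∀ z, Tendsto (fun a => P a z) (𝒰 : Filter X) (𝓝 (r z)) := fun z =>
    ((continuous_apply z).tendsto r).comp hlim'
  have hrx : r x = x := by
    refine tendsto_nhds_unique (hev x) ?_
    simp only [hPx]
    exact hUx
  obtain ⟨q, hq, hqr⟩ := exists_left_inverse hc hmin hcl hinv hdistal hr x
  obtain ⟨s, hs, hsq⟩ := exists_left_inverse hc hmin hcl hinv hdistal hq x
  have hqx : q x = x := by simpa [hrx] using hqr x rfl
  have hπx' : π x' = π x := (hNπ hx).symm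
  -- `q` is also a right inverse of `r` on the fibre, because it is injective there.
  have hqx'π : π (q x') = π x := by
    have := ellis_mem_of_isInv hcl hinv hq (x := x') (y := x) hπx'
    rwa [hqx] at this
  have hrqπ : π (r (q x')) = π x := by
    have := ellis_mem_of_isInv hcl hinv hr (x := q x') (y := x) hqx'π
    rwa [hrx] at this
  have hrq : r (q x') = x' := by
    rw [← hsq _ hrqπ, hqr _ hqx'π, hsq _ hπx']
  have hten : Tendsto (fun a => (a, P a (q x'))) (𝒰 : Filter X) (𝓝 (x, x')) := by
    have h2 := hev (q x')
    rw [hrq] at h2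
    exact Tendsto.prodMk_nhds hUx h2
  have hmem : ∀ a, (a, P a (q x')) ∈ N := fun a => by
    have h1 := ellis_mem_of_isInv hN hNinv hq hx
    have h2 := ellis_mem_of_isInv hN hNinv (hP a) h1
    rwa [hqx, hPx] at h2
  obtain ⟨a, ha1, ha2⟩ := (hUA.and (hten.eventually (hW.mem_nhds hxW))).exists
  exact ha1 ⟨_, hmem a, ha2⟩

/-! ### Approach within a given distance -/

lemma isOpen_near (hc : ∀ n : ℤ, Continuous ⇑(T ^ n)) (ε : ℝ) :
    IsOpen {z : X × X | Near T ε z.1 z.2} := by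
  have : {z : X × X | Near T ε z.1 z.2} =
      ⋃ n : ℤ, {z : X × X | dist ((T ^ n) z.1) ((T ^ n) z.2) < ε} := by
    ext z; simp [Near]
  rw [this]
  exact isOpen_iUnion fun n => isOpen_lt
    (((hc n).comp continuous_fst).dist ((hc n).comp continuous_snd)) continuous_const

lemma Near.mono {ε δ : ℝ} (h : ε ≤ δ) {x y : X} (hn : Near T ε x y) : Near T δ x y := by
  obtain ⟨n, hn⟩ := hn
  exact ⟨n, hn.trans_le h⟩

lemma Near.symm {ε : ℝ} {x y : X} (hn : Near T ε x y) : Near T ε y x := by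
  obtain ⟨n, hn⟩ := hn
  exact ⟨n, by rwa [dist_comm]⟩

lemma near_zpow {ε : ℝ} {x y : X} (m : ℤ) (hn : Near T ε x y) :
    Near T ε ((T ^ m) x) ((T ^ m) y) := by
  obtain ⟨n, hn⟩ := hn
  refine ⟨n - m, ?_⟩
  rwa [← zpow_add_apply, ← zpow_add_apply, sub_add_cancel]

lemma near_of_zpow {ε : ℝ} {x y : X} (m : ℤ) (hn : Near T ε ((T ^ m) x) ((T ^ m) y)) :
    Near T ε x y := by
  obtain ⟨n, hn⟩ := hn
  refine ⟨n + m, ?_⟩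
  rwa [zpow_add_apply, zpow_add_apply]

/-- Weak substitute for the triangle inequality, which `inf_n dist (T^n x) (T^n y)` lacks: on a
fibre, `{y | Near T ε x y}` is open in the topology whose basic neighbourhoods are the sets
`{y | Near T δ x' y}`. -/
lemma exists_near_trans [CompactSpace X] (hc : ∀ n : ℤ, Continuous ⇑(T ^ n))
    (hmin : IsMinimal T) {π : X → Y} (hcl : IsClosed (fiberRel π)) (hinv : IsInv T (fiberRel π))
    (hdistal : ∀ x y : X, π x = π y → Proximal T x y → x = y)
    {ε : ℝ} {x x' : X} (hx : π x = π x') (hn : Near T ε x x') :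
    ∃ δ > 0, ∀ x'', Near T δ x' x'' → Near T ε x x'' := by
  by_contra! hcon
  have hcon' : ∀ k : ℕ, ∃ x'', Near T (1 / ((k : ℝ) + 1)) x' x'' ∧ ¬ Near T ε x x'' :=
    fun k => hcon _ Nat.one_div_pos_of_nat
  choose u hu hnu using hcon'
  choose m hm using hu
  let 𝒰 : Ultrafilter ℕ := hyperfilter ℕ
  obtain ⟨p, hp, hlim⟩ := (isCompact_ellis (T := T)).ultrafilter_le_nhds
    (𝒰.map fun k => ⇑(T ^ m k))
    (le_principal_iff.2 (Filter.mem_map.2 (Filter.univ_mem' fun k => zpow_mem_ellis (m k))))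
  have hlim' : Tendsto (fun k => ⇑(T ^ m k)) (𝒰 : Filter ℕ) (𝓝 p) := hlim
  have hev : ∀ z, Tendsto (fun k => (T ^ m k) z) (𝒰 : Filter ℕ) (𝓝 (p z)) := fun z =>
    ((continuous_apply z).tendsto p).comp hlim'
  have hU : (𝒰 : Filter ℕ) ≤ atTop := by
    rw [← Nat.cofinite_eq_atTop]; exact hyperfilter_le_cofinite
  have hu' : Tendsto (fun k => (T ^ m k) (u k)) (𝒰 : Filter ℕ) (𝓝 (p x')) := by
    refine tendsto_of_tendsto_of_dist (hev x') ?_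
    refine squeeze_zero (fun _ => dist_nonneg) (fun k => (hm k).le) ?_
    exact tendsto_one_div_add_atTop_nhds_zero_nat.mono_left hU
  obtain ⟨q, hq, hqp⟩ := exists_left_inverse hc hmin hcl hinv hdistal hp x
  obtain ⟨l, hl⟩ := hn
  have hO : IsOpen {f : X → X | dist ((T ^ l) (f (p x))) ((T ^ l) (f (p x'))) < ε} :=
    isOpen_lt (((hc l).comp (continuous_apply _)).dist ((hc l).comp (continuous_apply _)))
      continuous_const
  obtain ⟨j, hj⟩ := exists_zpow_of_mem_ellis hq hO (by
    simp only [mem_ofPred_eq, hqp x rfl, hqp x' hx.symm]; exact hl)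
  have hO2 : IsOpen {z : X × X | dist ((T ^ l) ((T ^ j) z.1)) ((T ^ l) ((T ^ j) z.2)) < ε} :=
    isOpen_lt (((hc l).comp ((hc j).comp continuous_fst)).dist
      ((hc l).comp ((hc j).comp continuous_snd))) continuous_const
  have hten : Tendsto (fun k => ((T ^ m k) x, (T ^ m k) (u k))) (𝒰 : Filter ℕ)
      (𝓝 (p x, p x')) := (hev x).prodMk_nhds hu'
  obtain ⟨k, hk⟩ := (hten.eventually (hO2.mem_nhds hj)).exists
  refine hnu k ⟨l + (j + m k), ?_⟩
  simpa only [zpow_add_apply] using hk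

/-! ### The relative regionally proximal relation -/

/-- A closed invariant equivalence relation on `X` contained in `fiberRel π`. -/
structure IsICER (T : Equiv.Perm X) (π : X → Y) (R : Set (X × X)) : Prop where
  closed : IsClosed R
  inv : IsInv T R
  sub : R ⊆ fiberRel π
  refl : ∀ x, (x, x) ∈ R
  symm : ∀ x y, (x, y) ∈ R → (y, x) ∈ R
  trans : ∀ x y z, (x, y) ∈ R → (y, z) ∈ R → (x, z) ∈ R

/-- The pairs of `R` that some iterate of `T` brings to within `ε`. -/
def nearRel (T : Equiv.Perm X) (R : Set (X × X)) (ε : ℝ) : Set (X × X) :=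
  {z | z ∈ R ∧ Near T ε z.1 z.2}

/-- The regionally proximal relation of `T` relative to `R`: limits of pairs of `R` that some
iterate of `T` brings arbitrarily close together. -/
def derived (T : Equiv.Perm X) (R : Set (X × X)) : Set (X × X) :=
  ⋂ k : ℕ, closure (nearRel T R (1 / ((k : ℝ) + 1)))

lemma nearRel_mono {R : Set (X × X)} {ε δ : ℝ} (h : ε ≤ δ) : nearRel T R ε ⊆ nearRel T R δ :=
  fun _ hz => ⟨hz.1, hz.2.mono h⟩

lemma mem_derived_iff {R : Set (X × X)} {z : X × X} :
    z ∈ derived T R ↔ ∀ ε > 0, z ∈ closure (nearRel T R ε) := by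
  constructor
  · intro h ε hε
    obtain ⟨k, hk⟩ := exists_nat_one_div_lt hε
    exact closure_mono (nearRel_mono hk.le) (mem_iInter.1 h k)
  · exact fun h => mem_iInter.2 fun k => h _ Nat.one_div_pos_of_nat

lemma isClosed_derived {R : Set (X × X)} : IsClosed (derived T R) :=
  isClosed_iInter fun _ => isClosed_closure

lemma isInv_closure_nearRel (hc : ∀ n : ℤ, Continuous ⇑(T ^ n)) {R : Set (X × X)}
    (hR : IsInv T R) (ε : ℝ) : IsInv T (closure (nearRel T R ε)) := by
  intro x y h n
  have hcont : Continuous fun z : X × X => ((T ^ n) z.1, (T ^ n) z.2) :=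
    ((hc n).comp continuous_fst).prodMk ((hc n).comp continuous_snd)
  refine closure_minimal (fun z hz => ?_) (isClosed_closure.preimage hcont) h
  exact subset_closure ⟨hR _ _ hz.1 n, near_zpow n hz.2⟩

lemma isInv_derived (hc : ∀ n : ℤ, Continuous ⇑(T ^ n)) {R : Set (X × X)}
    (hR : IsInv T R) : IsInv T (derived T R) := fun x y h n =>
  mem_iInter.2 fun k => isInv_closure_nearRel hc hR _ x y (mem_iInter.1 h k) n

lemma derived_subset {R : Set (X × X)} (hR : IsClosed R) : derived T R ⊆ R := fun _ hz =>
  closure_minimal (fun _ h => h.1) hR (mem_iInter.1 hz 0)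

variable [CompactSpace X]

/-- For a dense set of points `x`, a pair `(x, x')` of `derived T R` is a limit of pairs
`(x, b) ∈ R` with the same first coordinate that become arbitrarily close. By Baire: it suffices
that `x` avoids the frontiers of countably many open sets. -/
lemma exists_dense_derived (hc : ∀ n : ℤ, Continuous ⇑(T ^ n))
    (hmin : IsMinimal T) {π : X → Y} (hcl : IsClosed (fiberRel π)) (hinv : IsInv T (fiberRel π))
    (hdistal : ∀ x y : X, π x = π y → Proximal T x y → x = y)
    {R : Set (X × X)} (hR : IsICER T π R) :
    ∃ D : Set X, Dense D ∧ ∀ x ∈ D, ∀ x', (x, x') ∈ derived T R →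
      ∀ V : Set X, IsOpen V → x' ∈ V → ∀ ε > 0, ∃ b ∈ V, (x, b) ∈ nearRel T R ε := by
  let P : Set X → ℕ → Set X := fun V k =>
    {a | ∃ b, (a, b) ∈ R ∧ b ∈ V ∧ Near T (1 / ((k : ℝ) + 1)) a b}
  have hP : ∀ V, IsOpen V → ∀ k, IsOpen (P V k) := by
    intro V hV k
    rw [isOpen_iff_mem_nhds]
    rintro a ⟨b, hab, hbV, hn⟩
    have hW : IsOpen ({z : X × X | z.2 ∈ V} ∩
        {z : X × X | Near T (1 / ((k : ℝ) + 1)) z.1 z.2}) :=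
      (hV.preimage continuous_snd).inter (isOpen_near hc _)
    filter_upwards [eventually_exists_lift hc hmin hcl hinv hdistal hR.closed hR.inv hR.sub hab
      hW ⟨hbV, hn⟩] with a' ⟨b', h1, h2, h3⟩
    exact ⟨b', h1, h2, h3⟩
  have hB := TopologicalSpace.countable_countableBasis X
  have : Countable (TopologicalSpace.countableBasis X) := hB.to_subtype
  refine ⟨⋂ i : TopologicalSpace.countableBasis X × ℕ, (frontier (P i.1 i.2))ᶜ, ?_, ?_⟩
  · refine dense_iInter_of_isOpen (fun i => isClosed_frontier.isOpen_compl) fun i => ?_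
    rw [← interior_eq_empty_iff_dense_compl]
    rw [← frontier_compl]
    exact interior_frontier
      (hP _ (TopologicalSpace.isOpen_of_mem_countableBasis i.1.2) _).isClosed_compl
  · intro x hx x' hxx' V hV hx'V ε hε
    obtain ⟨k, hk⟩ := exists_nat_one_div_lt hε
    obtain ⟨B, hB, hx'B, hBV⟩ :=
      (TopologicalSpace.isBasis_countableBasis X).exists_subset_of_mem_open hx'V hV
    have hfr := mem_iInter.1 hx (⟨B, hB⟩, k)
    have hBo : IsOpen B := TopologicalSpace.isOpen_of_mem_countableBasis hB
    have hxc : x ∈ closure (P B k) := by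
      rw [mem_closure_iff]
      intro O hO hxO
      obtain ⟨⟨a, b⟩, ⟨haO, hbB⟩, hab, hn⟩ :=
        mem_closure_iff.1 (mem_iInter.1 hxx' k) (O ×ˢ B) (hO.prod hBo) ⟨hxO, hx'B⟩
      exact ⟨a, haO, b, hab, hbB, hn⟩
    have hxP : x ∈ P B k := by
      by_contra hnot
      exact hfr ⟨hxc, by rwa [(hP B hBo k).interior_eq]⟩
    obtain ⟨b, hxb, hbB, hn⟩ := hxP
    exact ⟨b, hBV hbB, hxb, hn.mono hk.le⟩

lemma isICER_derived (hc : ∀ n : ℤ, Continuous ⇑(T ^ n))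
    (hmin : IsMinimal T) {π : X → Y} (hcl : IsClosed (fiberRel π)) (hinv : IsInv T (fiberRel π))
    (hdistal : ∀ x y : X, π x = π y → Proximal T x y → x = y)
    {R : Set (X × X)} (hR : IsICER T π R) : IsICER T π (derived T R) where
  closed := isClosed_derived
  inv := isInv_derived hc hR.inv
  sub := (derived_subset hR.closed).trans hR.sub
  refl x := mem_derived_iff.2 fun ε hε => subset_closure ⟨hR.refl x, 0, by simpa using hε⟩
  symm x y h := by
    refine mem_derived_iff.2 fun ε hε => ?_
    have hs : Continuous fun z : X × X => (z.2, z.1) := continuous_snd.prodMk continuous_fst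
    refine closure_minimal (fun z hz => ?_) (isClosed_closure.preimage hs)
      (mem_derived_iff.1 h ε hε)
    exact subset_closure ⟨hR.symm _ _ hz.1, hz.2.symm⟩
  trans x y w hxy hyw := by
    obtain ⟨D, hD, hDR⟩ := exists_dense_derived hc hmin hcl hinv hdistal hR
    refine mem_derived_iff.2 fun ε hε => mem_closure_iff_nhds_basis'
      (nhds_basis_opens (x, w)) |>.2 ?_
    rintro O ⟨hxwO, hO⟩
    obtain ⟨U, V, hU, hV, hxU, hwV, hUV⟩ := isOpen_prod_iff.1 hO x w hxwO
    -- points `a` near `y` have `derived T R`-partners in `V`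
    have hlift := eventually_exists_lift hc hmin hcl hinv hdistal isClosed_derived
      (isInv_derived hc hR.inv) ((derived_subset hR.closed).trans hR.sub) hyw
      (hV.preimage continuous_snd) hwV
    obtain ⟨A, hA, hAo, hyA⟩ := eventually_nhds_iff.1 hlift
    obtain ⟨⟨x₁, a₁⟩, ⟨hx₁U, ha₁A⟩, hx₁a₁, hn₁⟩ :=
      mem_closure_iff.1 (mem_derived_iff.1 hxy ε hε) (U ×ˢ A) (hU.prod hAo) ⟨hxU, hyA⟩
    -- move `a₁` into the dense set `D`, moving `x₁` accordingly
    have hswap : IsOpen ({z : X × X | (z.2, z.1) ∈ U ×ˢ A} ∩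
        {z : X × X | Near T ε z.1 z.2}) :=
      ((hU.prod hAo).preimage (continuous_snd.prodMk continuous_fst)).inter (isOpen_near hc ε)
    have hlift₂ := eventually_exists_lift hc hmin hcl hinv hdistal hR.closed hR.inv hR.sub
      (hR.symm _ _ hx₁a₁) hswap ⟨⟨hx₁U, ha₁A⟩, hn₁.symm⟩
    obtain ⟨A₂, hA₂, hA₂o, ha₁A₂⟩ := eventually_nhds_iff.1 hlift₂
    obtain ⟨a, haA₂, haD⟩ := hD.inter_open_nonempty A₂ hA₂o ⟨a₁, ha₁A₂⟩
    obtain ⟨x₂, hax₂, ⟨hx₂U, haA⟩, hn₂⟩ := hA₂ a haA₂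
    obtain ⟨b, hab, hbV⟩ := hA a haA
    have hx₂a := hR.symm _ _ hax₂
    obtain ⟨δ, hδ, htr⟩ := exists_near_trans hc hmin hcl hinv hdistal (hR.sub hx₂a) hn₂.symm
    obtain ⟨b', hb'V, hab', hn'⟩ := hDR a haD b hab V hV hbV δ hδ
    exact ⟨(x₂, b'), hUV ⟨hx₂U, hb'V⟩, hR.trans _ _ _ hx₂a hab', htr _ hn'⟩

/-- If every pair of `R` is a limit of pairs of `R` that become close, then by Baire the pairs
of `R` that are proximal are dense, so distality forces `R` to be the diagonal. -/
lemma eq_of_mem_of_derived_eq (hc : ∀ n : ℤ, Continuous ⇑(T ^ n)) {π : X → Y}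
    (hdistal : ∀ x y : X, π x = π y → Proximal T x y → x = y)
    {R : Set (X × X)} (hR : IsICER T π R) (hder : R ⊆ derived T R) {x y : X}
    (hxy : (x, y) ∈ R) : x = y := by
  have : CompactSpace R := isCompact_iff_compactSpace.1 hR.closed.isCompact
  have hdense : Dense (⋂ k : ℕ, {z : R | Near T (1 / ((k : ℝ) + 1)) z.1.1 z.1.2}) := by
    refine dense_iInter_of_isOpen
      (fun k => (isOpen_near hc _).preimage continuous_subtype_val) fun k => ?_
    intro z
    rw [closure_subtype]
    refine closure_mono ?_ (mem_iInter.1 (hder z.2) k)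
    rintro w ⟨hwR, hw⟩
    exact ⟨⟨w, hwR⟩, hw, rfl⟩
  have hsub : (⋂ k : ℕ, {z : R | Near T (1 / ((k : ℝ) + 1)) z.1.1 z.1.2}) ⊆
      {z : R | z.1.1 = z.1.2} := by
    intro z hz
    refine hdistal _ _ (hR.sub z.2) fun ε hε => ?_
    obtain ⟨k, hk⟩ := exists_nat_one_div_lt hε
    exact Near.mono hk.le (mem_iInter.1 hz k)
  have hclosed : IsClosed {z : R | z.1.1 = z.1.2} :=
    isClosed_eq (continuous_fst.comp continuous_subtype_val)
      (continuous_snd.comp continuous_subtype_val)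
  exact closure_minimal hsub hclosed (hdense ⟨(x, y), hxy⟩)

end Topological

/-! ### Empirical measures and unique ergodicity -/

section Measure

open scoped ENNReal BoundedContinuousFunction

variable {X Y : Type*} [MetricSpace X] [MeasurableSpace X] {T : Equiv.Perm X}

/-- The empirical measure of the orbit segment `x, T x, …, T^N x`, which has `N + 1` points. -/
noncomputable def emp {X : Type*} [MeasurableSpace X] (T : Equiv.Perm X) (N : ℕ)
    (x : X) : Measure X :=
  ((N : ℝ≥0∞) + 1)⁻¹ • ∑ n ∈ Finset.range (N + 1), Measure.dirac ((T ^ (n : ℤ)) x)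

lemma emp_apply {X : Type*} [MeasurableSpace X] {T : Equiv.Perm X} (N : ℕ) (x : X) {A : Set X}
    (hA : MeasurableSet A) :
    emp T N x A = ((N : ℝ≥0∞) + 1)⁻¹ *
      ∑ n ∈ Finset.range (N + 1), A.indicator (1 : X → ℝ≥0∞) ((T ^ (n : ℤ)) x) := by
  simp [emp, Measure.finsetSum_apply, Measure.dirac_apply' _ hA]

instance (N : ℕ) (x : X) : IsProbabilityMeasure (emp T N x) := by
  constructor
  rw [emp_apply _ _ MeasurableSet.univ]
  simp only [indicator_univ, Pi.one_apply, Finset.sum_const, Finset.card_range, nsmul_eq_mul,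
    mul_one, Nat.cast_add, Nat.cast_one]
  exact ENNReal.inv_mul_cancel (by simp) (by simp)

lemma integral_emp [BorelSpace X] (N : ℕ) (x : X) (f : X →ᵇ ℝ) :
    ∫ z, f z ∂(emp T N x) =
      ((N : ℝ) + 1)⁻¹ * ∑ n ∈ Finset.range (N + 1), f ((T ^ (n : ℤ)) x) := by
  rw [emp, integral_smul_measure, integral_finsetSum_measure]
  · simp only [smul_eq_mul, ENNReal.toReal_inv]
    have h1 : ((N : ℝ≥0∞) + 1).toReal = (N : ℝ) + 1 := by
      rw [ENNReal.toReal_add (by simp) (by simp)]; simp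
    rw [h1]
    congr 1
    refine Finset.sum_congr rfl fun n _ => ?_
    rw [integral_dirac' _ _ f.continuous.measurable.stronglyMeasurable]
  · exact fun n _ => f.integrable _

/-- Unique ergodicity: for a suitable length, the orbit segments of that length visit an open set
`G` with frequency more than `c < μ G`, whatever their starting point. Otherwise a weak limit of
empirical measures would be an invariant measure different from `μ`. -/
lemma exists_emp_gt [CompactSpace X] [BorelSpace X] (hT : Continuous T)
    {μ : Measure X}
    (huniq : ∀ μ' : Measure X, IsProbabilityMeasure μ' → μ'.map T = μ' → μ' = μ)
    {G : Set X} (hG : IsOpen G) {c : ℝ≥0∞} (hc : c < μ G) :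
    ∃ N : ℕ, ∀ x, c < emp T N x G := by
  by_contra! hcon
  choose x hx using hcon
  let m : ℕ → ProbabilityMeasure X := fun N => ⟨emp T N (x N), inferInstance⟩
  let 𝒰 : Ultrafilter ℕ := hyperfilter ℕ
  have hU : (𝒰 : Filter ℕ) ≤ atTop := by
    rw [← Nat.cofinite_eq_atTop]; exact hyperfilter_le_cofinite
  obtain ⟨m₀, -, hlim⟩ := isCompact_univ.ultrafilter_le_nhds (𝒰.map m) (by simp)
  have hlim' : Tendsto m (𝒰 : Filter ℕ) (𝓝 m₀) := hlim
  have hint := ProbabilityMeasure.tendsto_iff_forall_integral_tendsto.1 hlim'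
  have hinv : (m₀ : Measure X).map T = m₀ := by
    have : IsProbabilityMeasure ((m₀ : Measure X).map T) :=
      Measure.isProbabilityMeasure_map hT.aemeasurable
    refine ext_of_forall_integral_eq_of_IsFiniteMeasure fun f => ?_
    rw [integral_map hT.aemeasurable f.continuous.aestronglyMeasurable]
    have h1 := hint f
    have h2 := hint (f.compContinuous ⟨T, hT⟩)
    refine tendsto_nhds_unique h2 (tendsto_of_tendsto_of_dist h1 ?_)
    have hz : Tendsto (fun N : ℕ => 2 * ‖f‖ * (1 / ((N : ℝ) + 1))) (𝒰 : Filter ℕ) (𝓝 0) := by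
      simpa using (tendsto_one_div_add_atTop_nhds_zero_nat.mono_left hU).const_mul (2 * ‖f‖)
    refine squeeze_zero (fun _ => dist_nonneg) (fun N => ?_) hz
    change dist (∫ z, f z ∂(emp T N (x N)))
      (∫ z, (f.compContinuous ⟨T, hT⟩) z ∂(emp T N (x N))) ≤ _
    rw [integral_emp, integral_emp, dist_comm, Real.dist_eq, ← mul_sub, ← Finset.sum_sub_distrib]
    have hterm : ∀ n : ℕ, (f.compContinuous ⟨T, hT⟩) ((T ^ (n : ℤ)) (x N)) =
        f ((T ^ ((n + 1 : ℕ) : ℤ)) (x N)) := by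
      intro n
      rw [Nat.cast_add, Nat.cast_one, add_comm, zpow_add_apply]
      simp
    simp only [hterm]
    rw [Finset.sum_range_sub (fun n : ℕ => f ((T ^ (n : ℤ)) (x N))), abs_mul,
      abs_of_nonneg (by positivity), mul_comm, one_div]
    refine mul_le_mul_of_nonneg_right ?_ (by positivity)
    rw [← Real.dist_eq]
    exact f.dist_le_two_norm _ _
  have hμ := huniq m₀ inferInstance hinv
  have hle := ProbabilityMeasure.le_liminf_measure_open_of_tendsto hlim' hG
  rw [hμ] at hle
  have : (𝒰 : Filter ℕ).liminf (fun N => (m N : Measure X) G) ≤ c :=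
    liminf_le_of_le (by isBoundedDefault) fun b hb => by
      obtain ⟨N, hN⟩ := hb.exists
      exact hN.trans (hx N)
  exact absurd (hc.trans_le (hle.trans this)) (lt_irrefl _)

/-- Markov's inequality for the frequency of visits to `H`. -/
lemma measure_emp_ge_le [BorelSpace X] (hc : ∀ n : ℤ, Continuous ⇑(T ^ n)) {μ : Measure X}
    (hμ : ∀ n : ℤ, μ.map ⇑(T ^ n) = μ) (N : ℕ) {H : Set X} (hH : MeasurableSet H) :
    μ {x | 2⁻¹ ≤ emp T N x H} ≤ 2 * μ H := by
  have hmeas : ∀ n : ℤ, Measurable fun x => H.indicator (1 : X → ℝ≥0∞) ((T ^ n) x) := fun n =>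
    (measurable_one.indicator hH).comp (hc n).measurable
  have hsum : Measurable fun x => ∑ n ∈ Finset.range (N + 1),
      H.indicator (1 : X → ℝ≥0∞) ((T ^ (n : ℤ)) x) :=
    Finset.measurable_sum _ fun n _ => hmeas n
  have hm : Measurable fun x => emp T N x H := by
    simp only [emp_apply _ _ hH]
    exact hsum.const_mul _
  have hint : ∫⁻ x, emp T N x H ∂μ = μ H := by
    simp only [emp_apply _ _ hH]
    rw [lintegral_const_mul _ hsum,
      lintegral_finsetSum (Finset.range (N + 1)) (fun (n : ℕ) _ => hmeas (n : ℤ))]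
    have : ∀ n : ℤ, ∫⁻ x, H.indicator (1 : X → ℝ≥0∞) ((T ^ n) x) ∂μ = μ H := by
      intro n
      rw [← lintegral_map (measurable_one.indicator hH) (hc n).measurable, hμ n,
        lintegral_indicator_one hH]
    simp only [this, Finset.sum_const, Finset.card_range, nsmul_eq_mul, Nat.cast_add, Nat.cast_one]
    rw [← mul_assoc, ENNReal.inv_mul_cancel (by simp) (by simp), one_mul]
  have hmk := mul_meas_ge_le_lintegral (μ := μ) hm 2⁻¹
  rw [hint] at hmk
  calc μ {x | 2⁻¹ ≤ emp T N x H} = 2 * (2⁻¹ * μ {x | 2⁻¹ ≤ emp T N x H}) := by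
        rw [← mul_assoc, ENNReal.mul_inv_cancel (by simp) (by simp), one_mul]
    _ ≤ 2 * μ H := by gcongr

lemma isClosed_saturation {X : Type*} [MetricSpace X] [CompactSpace X] {R : Set (X × X)}
    (hR : IsClosed R) {K : Set X} (hK : IsClosed K) : IsClosed {x | ∃ k ∈ K, (x, k) ∈ R} := by
  have : {x | ∃ k ∈ K, (x, k) ∈ R} = Prod.fst '' (R ∩ Prod.snd ⁻¹' K) := by
    ext x
    constructor
    · rintro ⟨k, hk, hxk⟩
      exact ⟨(x, k), ⟨hxk, hk⟩, rfl⟩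
    · rintro ⟨⟨a, k⟩, ⟨hxk, hk⟩, rfl⟩
      exact ⟨k, hk, hxk⟩
  rw [this]
  exact ((hR.inter (hK.preimage continuous_snd)).isCompact.image continuous_fst).isClosed

/-- Quantitative form of `ae_exists_near`: the exceptional set of that statement has arbitrarily
small measure. -/
lemma measure_bad_le [CompactSpace X] [BorelSpace X] {π : X → Y} (hT : Continuous T)
    (hc : ∀ n : ℤ, Continuous ⇑(T ^ n)) {μ : Measure X} [IsProbabilityMeasure μ]
    (hμ : ∀ n : ℤ, μ.map ⇑(T ^ n) = μ)
    (huniq : ∀ μ' : Measure X, IsProbabilityMeasure μ' → μ'.map T = μ' → μ' = μ)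
    {R : Set (X × X)} (hR : IsICER T π R) {X₀ : Set X} (hX₀ : MeasurableSet X₀)
    (hX₀μ : μ X₀ᶜ = 0) (hX₀T : ∀ x ∈ X₀, ∀ n : ℤ, (T ^ n) x ∈ X₀) {ε : ℝ} (hε : 0 < ε)
    {θ : ℝ≥0∞} (hθ : 0 < θ) (hθ' : θ < 2⁻¹) :
    μ {x | ¬ ∀ w, (x, w) ∈ R → ∃ x' ∈ X₀, (w, x') ∈ nearRel T R ε} ≤ 2 * θ := by
  obtain ⟨t, -, htf, htc⟩ :=
    finite_cover_balls_of_compact (isCompact_univ (X := X)) (half_pos hε)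
  lift t to Finset X using htf
  obtain ⟨η, hη, hηt⟩ : ∃ η : ℝ≥0∞, 0 < η ∧ t.card * η ≤ θ := by
    refine ⟨θ / (t.card + 1), ENNReal.div_pos hθ.ne' (by simp), ?_⟩
    calc (t.card : ℝ≥0∞) * (θ / (t.card + 1)) ≤ (t.card + 1) * (θ / (t.card + 1)) := by
          gcongr; exact le_self_add
      _ ≤ θ := ENNReal.mul_div_le
  have hK : ∀ c : X, ∃ K ⊆ X₀ ∩ Metric.ball c (ε / 2), IsCompact K ∧
      μ ((X₀ ∩ Metric.ball c (ε / 2)) \ K) < η := fun c =>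
    (hX₀.inter measurableSet_ball).exists_isCompact_sdiff_lt (measure_ne_top _ _) hη.ne'
  choose K hKsub hKc hKη using hK
  let F : X → Set X := fun c => {x | ∃ k ∈ K c, (x, k) ∈ R}
  have hF : ∀ c, IsClosed (F c) := fun c => isClosed_saturation hR.closed (hKc c).isClosed
  have hV : ∀ c, ∃ V ⊇ F c, IsOpen V ∧ μ (V \ F c) < η := by
    intro c
    obtain ⟨V, hFV, hVo, -, hV⟩ :=
      (hF c).measurableSet.exists_isOpen_sdiff_lt (measure_ne_top μ _) hη.ne'
    exact ⟨V, hFV, hVo, hV⟩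
  choose V hFV hVo hVη using hV
  -- the largest `R`-saturated subset of `V c`
  let U : X → Set X := fun c => {x | ∀ w, (x, w) ∈ R → w ∈ V c}
  have hU : ∀ c, IsOpen (U c) := by
    intro c
    have : U c = {x | ∃ k ∈ (V c)ᶜ, (x, k) ∈ R}ᶜ := by
      ext x
      simp only [U, mem_ofPred_eq, mem_compl_iff, not_exists, not_and]
      exact ⟨fun h w hw hxw => hw (h w hxw), fun h w hxw => by_contra fun hw => h w hw hxw⟩
    rw [this]
    exact (isClosed_saturation hR.closed (hVo c).isClosed_compl).isOpen_compl
  have hUV : ∀ c, U c ⊆ V c := fun c x hx => hx x (hR.refl x)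
  have hFsat : ∀ c x w, (x, w) ∈ R → x ∈ F c → w ∈ F c := by
    rintro c x w hxw ⟨k, hk, hxk⟩
    exact ⟨k, hk, hR.trans _ _ _ (hR.symm _ _ hxw) hxk⟩
  have hUsat : ∀ c x w, (x, w) ∈ R → x ∈ U c → w ∈ U c := fun c x w hxw hx v hwv =>
    hx v (hR.trans _ _ _ hxw hwv)
  have hFU : ∀ c, F c ⊆ U c := fun c x hx w hxw => hFV c (hFsat c x w hxw hx)
  have hKF : ∀ c, K c ⊆ F c := fun c k hk => ⟨k, hk, hR.refl k⟩
  let G : Set X := ⋃ c ∈ t, Metric.ball c (ε / 2) ∩ U c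
  let H : Set X := ⋃ c ∈ t, U c \ F c
  have hG : IsOpen G := isOpen_biUnion fun c _ => Metric.isOpen_ball.inter (hU c)
  have hH : MeasurableSet H := t.measurableSet_biUnion fun c _ =>
    (hU c).measurableSet.diff (hF c).measurableSet
  have hHμ : μ H ≤ θ := by
    calc μ H ≤ ∑ c ∈ t, μ (U c \ F c) := measure_biUnion_finset_le _ _
      _ ≤ ∑ _c ∈ t, η := Finset.sum_le_sum fun c _ =>
          (measure_mono (sdiff_subset_sdiff_left (hUV c))).trans (hVη c).le
      _ ≤ θ := by simpa using hηt
  have hGμ : μ Gᶜ ≤ θ := by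
    have hsub : Gᶜ ⊆ ⋃ c ∈ t, Metric.ball c (ε / 2) \ K c := by
      intro x hx
      obtain ⟨c, hct, hxc⟩ := mem_iUnion₂.1 (htc (mem_univ x))
      refine mem_iUnion₂.2 ⟨c, hct, hxc, fun hxK => hx ?_⟩
      exact mem_iUnion₂.2 ⟨c, hct, hxc, hFU c (hKF c hxK)⟩
    calc μ Gᶜ ≤ ∑ c ∈ t, μ (Metric.ball c (ε / 2) \ K c) :=
          (measure_mono hsub).trans (measure_biUnion_finset_le _ _)
      _ ≤ ∑ _c ∈ t, η := Finset.sum_le_sum fun c _ => by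
          calc μ (Metric.ball c (ε / 2) \ K c)
              ≤ μ (X₀ᶜ ∪ (X₀ ∩ Metric.ball c (ε / 2)) \ K c) := by
                refine measure_mono fun x hx => ?_
                by_cases hx0 : x ∈ X₀
                · exact Or.inr ⟨⟨hx0, hx.1⟩, hx.2⟩
                · exact Or.inl hx0
            _ ≤ μ X₀ᶜ + μ ((X₀ ∩ Metric.ball c (ε / 2)) \ K c) := measure_union_le _ _
            _ ≤ η := by rw [hX₀μ, zero_add]; exact (hKη c).le
      _ ≤ θ := by simpa using hηt
  have hG2 : 2⁻¹ < μ G := by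
    by_contra! hle
    have h1 : μ G + μ Gᶜ = 1 := prob_add_prob_compl hG.measurableSet
    have h2 : μ G + μ Gᶜ < 2⁻¹ + 2⁻¹ :=
      ENNReal.add_lt_add_of_le_of_lt (measure_ne_top _ _) hle (hGμ.trans_lt hθ')
    rw [h1, ENNReal.inv_two_add_inv_two] at h2
    exact lt_irrefl _ h2
  obtain ⟨N, hN⟩ := exists_emp_gt hT huniq hG hG2
  refine (measure_mono ?_).trans
    ((measure_emp_ge_le hc hμ N hH).trans (mul_le_mul_right hHμ 2))
  intro x hx
  by_contra hxN
  refine hx fun w hxw => ?_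
  -- `H` is saturated, so the whole class of `x` visits it equally often
  have hHiff : ∀ a b, (a, b) ∈ R → a ∈ H → b ∈ H := by
    intro a b hab ha
    obtain ⟨c, hct, h1, h2⟩ := mem_iUnion₂.1 ha
    exact mem_iUnion₂.2 ⟨c, hct, hUsat c a b hab h1, fun h => h2 (hFsat c b a (hR.symm _ _ hab) h)⟩
  have hemp : emp T N w H = emp T N x H := by
    rw [emp_apply _ _ hH, emp_apply _ _ hH]
    congr 1
    refine Finset.sum_congr rfl fun n _ => ?_
    have h1 := hR.inv x w hxw n
    by_cases hxH : (T ^ (n : ℤ)) x ∈ H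
    · rw [indicator_of_mem hxH, indicator_of_mem (hHiff _ _ h1 hxH)]; rfl
    · rw [indicator_of_notMem hxH,
        indicator_of_notMem fun h => hxH (hHiff _ _ (hR.symm _ _ h1) h)]
  have hlt : emp T N w H < emp T N w G := by
    rw [hemp]
    exact (not_le.1 hxN).trans (hN w)
  obtain ⟨n, hnG, hnH⟩ : ∃ n : ℤ, (T ^ n) w ∈ G ∧ (T ^ n) w ∉ H := by
    by_contra! hcon
    refine absurd hlt (not_lt.2 ?_)
    rw [emp_apply _ _ hH, emp_apply _ _ hG.measurableSet]
    refine mul_le_mul_right (Finset.sum_le_sum fun n _ => ?_) _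
    by_cases h : (T ^ (n : ℤ)) w ∈ G
    · rw [indicator_of_mem h, indicator_of_mem (hcon _ h)]
    · rw [indicator_of_notMem h]; exact zero_le
  obtain ⟨c, hct, hcb, hcU⟩ := mem_iUnion₂.1 hnG
  have hcF : (T ^ n) w ∈ F c := by
    by_contra h
    exact hnH (mem_iUnion₂.2 ⟨c, hct, hcU, h⟩)
  obtain ⟨k, hk, hwk⟩ := hcF
  have hk' := hKsub c hk
  have hinvk : (T ^ n) ((T ^ (-n)) k) = k := by
    rw [← zpow_add_apply, add_neg_cancel, zpow_zero, Equiv.Perm.one_apply]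
  have hinvw : (T ^ (-n)) ((T ^ n) w) = w := by
    rw [← zpow_add_apply, neg_add_cancel, zpow_zero, Equiv.Perm.one_apply]
  refine ⟨(T ^ (-n)) k, hX₀T k hk'.1 _, ?_, n, ?_⟩
  · have := hR.inv _ _ hwk (-n)
    rwa [hinvw] at this
  · change dist ((T ^ n) w) ((T ^ n) ((T ^ (-n)) k)) < ε
    rw [hinvk]
    calc dist ((T ^ n) w) k ≤ dist ((T ^ n) w) c + dist k c := dist_triangle_right _ _ _
      _ < ε / 2 + ε / 2 := add_lt_add hcb hk'.2
      _ = ε := add_halves ε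

/-- For almost every `x`, each point `w` of the `R`-class of `x` is brought within `ε` of some
point of its own class lying in the invariant set `X₀` of full measure.

Compact approximations of `X₀` inside finitely many small balls, and open saturated
neighbourhoods of their saturations, reduce the claim to the uniform visit frequencies provided
by unique ergodicity and to a saturated exceptional set, whose visits depend on the class only. -/
lemma ae_exists_near [CompactSpace X] [BorelSpace X] {π : X → Y} (hT : Continuous T)
    (hc : ∀ n : ℤ, Continuous ⇑(T ^ n)) {μ : Measure X} [IsProbabilityMeasure μ]
    (hμ : ∀ n : ℤ, μ.map ⇑(T ^ n) = μ)
    (huniq : ∀ μ' : Measure X, IsProbabilityMeasure μ' → μ'.map T = μ' → μ' = μ)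
    {R : Set (X × X)} (hR : IsICER T π R) {X₀ : Set X} (hX₀ : MeasurableSet X₀)
    (hX₀μ : μ X₀ᶜ = 0) (hX₀T : ∀ x ∈ X₀, ∀ n : ℤ, (T ^ n) x ∈ X₀) {ε : ℝ} (hε : 0 < ε) :
    ∀ᵐ x ∂μ, ∀ w, (x, w) ∈ R → ∃ x' ∈ X₀, (w, x') ∈ nearRel T R ε := by
  rw [ae_iff]
  by_contra hne
  set b := μ {x | ¬ ∀ w, (x, w) ∈ R → ∃ x' ∈ X₀, (w, x') ∈ nearRel T R ε} with hb
  have hbt : b ≠ ∞ := measure_ne_top _ _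
  have h1 : b ≤ 2 * min (b / 2 / 2) (2⁻¹ / 2) :=
    measure_bad_le hT hc hμ huniq hR hX₀ hX₀μ hX₀T hε
      (lt_min (ENNReal.half_pos (ENNReal.half_pos hne).ne')
        (ENNReal.half_pos (by simp)))
      ((min_le_right _ _).trans_lt (ENNReal.half_lt_self (by simp) (by simp)))
  have h2 : 2 * min (b / 2 / 2) (2⁻¹ / 2) ≤ b / 2 :=
    (mul_le_mul_right (min_le_left _ _) 2).trans ENNReal.mul_div_le
  exact absurd (h1.trans h2) (not_le.2 (ENNReal.half_lt_self hne hbt))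

end Measure

/-! ### Fullness of a relation with respect to the fibre measures -/

section Support

open scoped ENNReal

variable {X Y : Type*} [MetricSpace X] [CompactSpace X] [MeasurableSpace X] [BorelSpace X]
  [MeasurableSpace Y] {T : Equiv.Perm X}

/-- Up to `R`, almost every fibre is covered by the support of its measure: for almost every `y`,
each point of `π⁻¹(y)` is `R`-related to a point of `supp μ_y`. -/
def FullMod (π : X → Y) (ν : Measure Y) (μy : Y → Measure X) (R : Set (X × X)) : Prop :=
  ∀ᵐ y ∂ν, ∀ x, π x = y → ∃ c ∈ (μy y).support, (x, c) ∈ R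

lemma ae_ae_of_ae {X Y : Type*} [MeasurableSpace X] [MeasurableSpace Y]
    {μ : Measure X} {ν : Measure Y} {μy : Y → Measure X}
    (hmeas : ∀ A : Set X, MeasurableSet A → Measurable fun y => μy y A)
    (hdisint : ∀ A : Set X, MeasurableSet A → μ A = ∫⁻ y, μy y A ∂ν) {p : X → Prop}
    (hp : ∀ᵐ x ∂μ, p x) : ∀ᵐ y ∂ν, ∀ᵐ x ∂(μy y), p x := by
  obtain ⟨A, hA, hAm, hA0⟩ := exists_measurable_superset_of_null (ae_iff.1 hp)
  rw [hdisint A hAm, lintegral_eq_zero_iff (hmeas A hAm)] at hA0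
  filter_upwards [hA0] with y hy
  exact ae_iff.2 (measure_mono_null hA hy)

/-- Almost every point `x` of `X` lies in the support of the measure on its own fibre. -/
lemma exists_measurable_support {μ : Measure X} {ν : Measure Y} {μy : Y → Measure X}
    {π : X → Y} (hπ : Measurable π)
    (hmeas : ∀ A : Set X, MeasurableSet A → Measurable fun y => μy y A)
    (hdisint : ∀ A : Set X, MeasurableSet A → μ A = ∫⁻ y, μy y A ∂ν)
    (hfib : ∀ᵐ y ∂ν, ∀ᵐ x ∂(μy y), π x = y) :
    MeasurableSet {x | x ∈ (μy (π x)).support} ∧ ∀ᵐ x ∂μ, x ∈ (μy (π x)).support := by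
  let S := TopologicalSpace.countableBasis X
  have hS : S.Countable := TopologicalSpace.countable_countableBasis X
  let A : Set X → Set X := fun B => B ∩ {x | μy (π x) B = 0}
  have hBm : ∀ B ∈ S, MeasurableSet B := fun B hB =>
    (TopologicalSpace.isOpen_of_mem_countableBasis hB).measurableSet
  have hAm : ∀ B ∈ S, MeasurableSet (A B) := fun B hB =>
    (hBm B hB).inter (((hmeas B (hBm B hB)).comp hπ) (measurableSet_singleton 0))
  have hcompl : {x | x ∈ (μy (π x)).support}ᶜ = ⋃ B ∈ S, A B := by
    ext x
    simp only [mem_compl_iff, mem_ofPred_eq, Measure.notMem_support_iff_exists, mem_iUnion, A,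
      mem_inter_iff, exists_prop]
    constructor
    · rintro ⟨U, hU, hU0⟩
      obtain ⟨B, hB, hxB, hBU⟩ :=
        (TopologicalSpace.isBasis_countableBasis X).mem_nhds_iff.1 hU
      exact ⟨B, hB, hxB, measure_mono_null hBU hU0⟩
    · rintro ⟨B, hB, hxB, hB0⟩
      exact ⟨B, (TopologicalSpace.isOpen_of_mem_countableBasis hB).mem_nhds hxB, hB0⟩
  have hA0 : ∀ B ∈ S, μ (A B) = 0 := by
    intro B hB
    rw [hdisint _ (hAm B hB), lintegral_eq_zero_iff (hmeas _ (hAm B hB))]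
    filter_upwards [hfib] with y hy
    by_cases hyB : μy y B = 0
    · exact measure_mono_null inter_subset_left hyB
    · have hsub : A B ⊆ {x | ¬ π x = y} := fun x hx hxy => hyB (by rw [← hxy]; exact hx.2)
      exact measure_mono_null hsub (ae_iff.1 hy)
  constructor
  · rw [← MeasurableSet.compl_iff, hcompl]
    exact MeasurableSet.biUnion hS hAm
  · change μ {x | x ∈ (μy (π x)).support}ᶜ = 0
    rw [hcompl]
    exact (measure_biUnion_null_iff hS).2 hA0

/-- The inductive step: fullness modulo `R` passes to the smaller relation `derived T R`.

Given `(x, c) ∈ R` with `c ∈ supp μ_y`, the points near `c` have positive `μ_y`-measure, so some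
of them satisfy the conclusion of `ae_exists_near`; since the first projection of `R` is open,
they have `R`-partners near `x`, and these become close to points of `supp μ_y`. -/
lemma FullMod.derived (hT : Continuous T)
    (hc : ∀ n : ℤ, Continuous ⇑(T ^ n)) (hmin : IsMinimal T)
    {μ : Measure X} [IsProbabilityMeasure μ] (hμ : ∀ n : ℤ, μ.map ⇑(T ^ n) = μ)
    (huniq : ∀ μ' : Measure X, IsProbabilityMeasure μ' → μ'.map T = μ' → μ' = μ)
    {π : X → Y} (hπ : Measurable π) (hcl : IsClosed (fiberRel π)) (hinv : IsInv T (fiberRel π))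
    (hdistal : ∀ x y : X, π x = π y → Proximal T x y → x = y)
    {ν : Measure Y} {μy : Y → Measure X}
    (hmeas : ∀ A : Set X, MeasurableSet A → Measurable fun y => μy y A)
    (hdisint : ∀ A : Set X, MeasurableSet A → μ A = ∫⁻ y, μy y A ∂ν)
    (hfib : ∀ᵐ y ∂ν, ∀ᵐ x ∂(μy y), π x = y)
    {R : Set (X × X)} (hR : IsICER T π R) (hfull : FullMod π ν μy R) :
    FullMod π ν μy (derived T R) := by
  obtain ⟨hX₁, hX₁μ⟩ := exists_measurable_support hπ hmeas hdisint hfib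
  -- the largest invariant subset of `{x | x ∈ supp μ_{π x}}`
  let X₀ : Set X := {x | ∀ n : ℤ, (T ^ n) x ∈ {x | x ∈ (μy (π x)).support}}
  have hX₀ : MeasurableSet X₀ := by
    have : X₀ = ⋂ n : ℤ, ⇑(T ^ n) ⁻¹' {x | x ∈ (μy (π x)).support} := by
      ext x; simp [X₀]
    rw [this]
    exact MeasurableSet.iInter fun n => (hc n).measurable hX₁
  have hX₀μ : μ X₀ᶜ = 0 := by
    have : ∀ᵐ x ∂μ, ∀ n : ℤ, (T ^ n) x ∈ {x | x ∈ (μy (π x)).support} := by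
      rw [ae_all_iff]
      intro n
      have h := hX₁μ
      rw [← hμ n] at h
      exact ae_of_ae_map (hc n).measurable.aemeasurable h
    exact this
  have hX₀T : ∀ x ∈ X₀, ∀ n : ℤ, (T ^ n) x ∈ X₀ := by
    intro x hx n m
    rw [← zpow_add_apply]
    exact hx (m + n)
  have hX₀X₁ : ∀ x ∈ X₀, x ∈ (μy (π x)).support := fun x hx => hx 0
  have hnear : ∀ᵐ y ∂ν, ∀ k : ℕ, ∀ᵐ x ∂(μy y), ∀ w, (x, w) ∈ R →
      ∃ x' ∈ X₀, (w, x') ∈ nearRel T R (1 / ((k : ℝ) + 1)) :=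
    ae_all_iff.2 fun k => ae_ae_of_ae hmeas hdisint
      (ae_exists_near hT hc hμ huniq hR hX₀ hX₀μ hX₀T Nat.one_div_pos_of_nat)
  filter_upwards [hfull, hnear, hfib] with y hy hyn hyfib x hx
  obtain ⟨c, hcs, hxc⟩ := hy x hx
  have hstep : ∀ k : ℕ, ∃ x' ∈ (μy y).support,
      (x, x') ∈ closure (nearRel T R (1 / ((k : ℝ) + 1))) := by
    intro k
    have hclA := isClosed_saturation (isClosed_closure (s := nearRel T R (1 / ((k : ℝ) + 1))))
      (Measure.isClosed_support (μ := μy y))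
    refine hclA.closure_subset_iff.2 subset_rfl (mem_closure_iff.2 fun O hO hxO => ?_)
    -- points near `c` have `R`-partners in `O`, and typical points are dense in the support
    have hlift := eventually_exists_lift hc hmin hcl hinv hdistal hR.closed hR.inv hR.sub
      (hR.symm _ _ hxc) (hO.preimage continuous_snd) hxO
    have hpos := (Measure.mem_support_iff_forall c).1 hcs _ hlift
    obtain ⟨a, ⟨b, hab, hbO⟩, ha, hay⟩ : ∃ a, (∃ b, (a, b) ∈ R ∧ (a, b) ∈ Prod.snd ⁻¹' O) ∧
        (∀ w, (a, w) ∈ R → ∃ x' ∈ X₀, (w, x') ∈ nearRel T R (1 / ((k : ℝ) + 1))) ∧ π a = y := by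
      by_contra! hcon
      have hsub : {a | ∃ b, (a, b) ∈ R ∧ (a, b) ∈ Prod.snd ⁻¹' O} ⊆
          {a | ¬ ((∀ w, (a, w) ∈ R → ∃ x' ∈ X₀, (w, x') ∈ nearRel T R (1 / ((k : ℝ) + 1))) ∧
            π a = y)} := fun a ha h => hcon a ha h.1 h.2
      exact hpos.ne' (measure_mono_null hsub (ae_iff.1 ((hyn k).and hyfib)))
    obtain ⟨x', hx'₀, hbx'⟩ := ha b hab
    have hx'y : π x' = y := by
      have h1 : π b = π x' := hR.sub hbx'.1
      have h2 : π a = π b := hR.sub hab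
      rw [← h1, ← h2, hay]
    exact ⟨b, hbO, x', by simpa [hx'y] using hX₀X₁ x' hx'₀, subset_closure hbx'⟩
  let L : ℕ → Set X := fun k =>
    (μy y).support ∩ {x' | (x, x') ∈ closure (nearRel T R (1 / ((k : ℝ) + 1)))}
  have hLcl : ∀ k, IsClosed (L k) := fun k => Measure.isClosed_support.inter
    (isClosed_closure.preimage (continuous_const.prodMk continuous_id))
  obtain ⟨x', hx'⟩ := IsCompact.nonempty_iInter_of_sequence_nonempty_isCompact_isClosed L
    (fun k z hz => ⟨hz.1, closure_mono (nearRel_mono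
      (Nat.one_div_le_one_div (Nat.le_succ k))) hz.2⟩)
    (fun k => let ⟨x', h1, h2⟩ := hstep k; ⟨x', h1, h2⟩) (hLcl 0).isCompact hLcl
  exact ⟨x', (mem_iInter.1 hx' 0).1, mem_iInter.2 fun k => (mem_iInter.1 hx' k).2⟩

/-- Fullness passes to intersections of chains: by second countability only countably many
relations matter, and the sets of admissible support points form a chain of compact sets. -/
lemma FullMod.sInter {π : X → Y} {ν : Measure Y} {μy : Y → Measure X}
    {C : Set (Set (X × X))} (hchain : IsChain (· ⊆ ·) C) (hne : C.Nonempty)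
    (hC : ∀ R ∈ C, IsClosed R) (hfull : ∀ R ∈ C, FullMod π ν μy R) :
    FullMod π ν μy (⋂₀ C) := by
  obtain ⟨D, hDc, hDsub, hDeq⟩ := TopologicalSpace.isOpen_sUnion_countable (compl '' C) (by
    rintro _ ⟨R, hR, rfl⟩
    exact (hC R hR).isOpen_compl)
  obtain ⟨R₀, hR₀⟩ := hne
  let C' : Set (Set (X × X)) := insert R₀ (compl '' D)
  have hC'c : C'.Countable := (hDc.image _).insert _
  have hC'C : C' ⊆ C := by
    rintro R (rfl | ⟨_, hS, rfl⟩)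
    · exact hR₀
    · obtain ⟨R, hR, rfl⟩ := hDsub hS
      rwa [compl_compl]
  have hsub : ⋂₀ C' ⊆ ⋂₀ C := by
    intro z hz R hR
    by_contra hzR
    have : z ∈ ⋃₀ D := hDeq ▸ ⟨Rᶜ, ⟨R, hR, rfl⟩, hzR⟩
    obtain ⟨S, hS, hzS⟩ := this
    exact hz Sᶜ (Or.inr ⟨S, hS, rfl⟩) hzS
  have hall : ∀ᵐ y ∂ν, ∀ R ∈ C', ∀ x, π x = y → ∃ c ∈ (μy y).support, (x, c) ∈ R :=
    (ae_ball_iff hC'c).2 fun R hR => hfull R (hC'C hR)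
  filter_upwards [hall] with y hy x hx
  have : Nonempty C' := ⟨⟨R₀, Or.inl rfl⟩⟩
  have hcl : ∀ R : C', IsClosed ((μy y).support ∩ {c | (x, c) ∈ R.1}) := fun R =>
    Measure.isClosed_support.inter
      ((hC _ (hC'C R.2)).preimage (continuous_const.prodMk continuous_id))
  obtain ⟨c, hc⟩ := IsCompact.nonempty_iInter_of_directed_nonempty_isCompact_isClosed
    (fun R : C' => (μy y).support ∩ {c | (x, c) ∈ R.1})
    (by
      intro R S
      rcases hchain.total (hC'C R.2) (hC'C S.2) with h | h
      · exact ⟨R, subset_rfl, fun c hc => ⟨hc.1, h hc.2⟩⟩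
      · exact ⟨S, fun c hc => ⟨hc.1, h hc.2⟩, subset_rfl⟩)
    (fun R => let ⟨c, h1, h2⟩ := hy R.1 R.2 x hx; ⟨c, h1, h2⟩)
    (fun R => (hcl R).isCompact) hcl
  refine ⟨c, (mem_iInter.1 hc ⟨R₀, Or.inl rfl⟩).1, hsub fun R hR => ?_⟩
  exact (mem_iInter.1 hc ⟨R, hR⟩).2

end Support

end FiberSupport

/-- Let `(X, T)` be strictly ergodic with unique invariant measure `μ`, let
`π : (X,T) → (Y,S)` be a distal extension, `ν = π_* μ`, and let `(μ_y)` be the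
disintegration of `μ` over `ν`.  Then there is `Y₀ ⊆ Y` with `ν Y₀ = 1` such that for
every `y ∈ Y₀` one has `supp μ_y = π⁻¹(y)` (encoded by: `μ_y (π⁻¹ {y}) = 1` and every
point of the fiber has all of its open neighborhoods of positive `μ_y`-measure). -/
theorem full_fiber_support_of_disintegration {X Y : Type*}
    [MetricSpace X] [CompactSpace X] [MeasurableSpace X] [BorelSpace X]
    [MetricSpace Y] [CompactSpace Y] [MeasurableSpace Y] [BorelSpace Y]
    (T : Equiv.Perm X) (hT : Continuous T) (hT' : Continuous T.symm)
    (hmin : IsMinimal T)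
    (μ : Measure X) [IsProbabilityMeasure μ] (hμinv : μ.map T = μ)
    (huniq : ∀ μ' : Measure X, IsProbabilityMeasure μ' → μ'.map T = μ' → μ' = μ)
    (S : Equiv.Perm Y) (hS : Continuous S) (hS' : Continuous S.symm)
    (π : X → Y) (hπc : Continuous π) (hπs : Function.Surjective π)
    (hfac : ∀ x : X, π (T x) = S (π x))
    (hdistal : ∀ x y : X, π x = π y → Proximal T x y → x = y)
    (ν : Measure Y) (hν : ν = μ.map π)
    (μy : Y → Measure X)
    (hprob : ∀ᵐ y ∂ν, IsProbabilityMeasure (μy y))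
    (hfiber : ∀ᵐ y ∂ν, μy y (π ⁻¹' {y}) = 1)
    (hmeas : ∀ A : Set X, MeasurableSet A → Measurable fun y => μy y A)
    (hdisint : ∀ A : Set X, MeasurableSet A → μ A = ∫⁻ y, μy y A ∂ν) :
    ∃ Y₀ : Set Y, ν Y₀ = 1 ∧ ∀ y ∈ Y₀,
      μy y (π ⁻¹' {y}) = 1 ∧
      ∀ x : X, π x = y → ∀ U : Set X, IsOpen U → x ∈ U → 0 < μy y U := by
  have hc : ∀ n : ℤ, Continuous ⇑(T ^ n) := FiberSupport.continuous_zpow hT hT'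
  have hfacn : ∀ (n : ℤ) (x : X), π ((T ^ n) x) = (S ^ n) (π x) := by
    intro n
    induction n using Int.induction_on with
    | zero => simp
    | succ k ih =>
      intro x
      rw [add_comm, FiberSupport.zpow_add_apply, FiberSupport.zpow_add_apply, zpow_one, zpow_one,
        hfac, ih]
    | pred k ih =>
      intro x
      rw [sub_eq_add_neg, add_comm, FiberSupport.zpow_add_apply, FiberSupport.zpow_add_apply,
        ← ih x, zpow_neg_one, zpow_neg_one, Equiv.Perm.eq_inv_iff_eq, ← hfac]
      simp
  have hcl : IsClosed (FiberSupport.fiberRel π) :=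
    isClosed_eq (hπc.comp continuous_fst) (hπc.comp continuous_snd)
  have hinv : FiberSupport.IsInv T (FiberSupport.fiberRel π) := by
    intro x y h n
    change π _ = π _
    rw [hfacn, hfacn]
    exact congrArg _ h
  have hμn : ∀ n : ℤ, μ.map ⇑(T ^ n) = μ := by
    have hstep : ∀ n : ℤ, μ.map ⇑(T ^ (n + 1)) = μ.map ⇑(T ^ n) := by
      intro n
      have : ⇑(T ^ (n + 1)) = ⇑(T ^ n) ∘ T := by
        ext x; simp [FiberSupport.zpow_add_apply]
      rw [this, ← Measure.map_map (hc n).measurable hT.measurable, hμinv]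
    intro n
    induction n using Int.induction_on with
    | zero => simp
    | succ k ih => rw [hstep, ih]
    | pred k ih => rw [← hstep, sub_add_cancel, ih]
  have hνp : IsProbabilityMeasure ν :=
    hν ▸ Measure.isProbabilityMeasure_map hπc.measurable.aemeasurable
  have hfib : ∀ᵐ y ∂ν, ∀ᵐ x ∂(μy y), π x = y := by
    filter_upwards [hprob, hfiber] with y hy hy1
    exact (prob_compl_eq_zero_iff (hπc.measurable (measurableSet_singleton y))).2 hy1
  -- a minimal closed invariant equivalence relation among those that are full
  obtain ⟨R, -, hRmin⟩ := zorn_superset_nonempty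
    {R | FiberSupport.IsICER T π R ∧ FiberSupport.FullMod π ν μy R} (by
      intro C hCS hchain hne
      refine ⟨⋂₀ C, ⟨⟨?_, ?_, ?_, ?_, ?_, ?_⟩, ?_⟩, fun R hR => Set.sInter_subset_of_mem hR⟩
      · exact isClosed_sInter fun R hR => (hCS hR).1.closed
      · exact fun x y h n R hR => (hCS hR).1.inv x y (h R hR) n
      · obtain ⟨R, hR⟩ := hne
        exact fun z hz => (hCS hR).1.sub (hz R hR)
      · exact fun x R hR => (hCS hR).1.refl x
      · exact fun x y h R hR => (hCS hR).1.symm x y (h R hR)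
      · exact fun x y z h h' R hR => (hCS hR).1.trans x y z (h R hR) (h' R hR)
      · exact FiberSupport.FullMod.sInter hchain hne (fun R hR => (hCS hR).1.closed)
          fun R hR => (hCS hR).2)
    (FiberSupport.fiberRel π) (by
      refine ⟨⟨hcl, hinv, subset_rfl, fun _ => rfl, fun _ _ h => Eq.symm h,
        fun _ _ _ h h' => Eq.trans h h'⟩, ?_⟩
      filter_upwards [hprob, hfib] with y hy hyfib x hx
      obtain ⟨c, hc1, hc2⟩ :=
        (hyfib.and (Measure.support_mem_ae (μ := μy y))).exists
      exact ⟨c, hc2, hx.trans hc1.symm⟩)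
  obtain ⟨hR, hRfull⟩ := hRmin.prop
  have hder := hRmin.le_of_le
    ⟨FiberSupport.isICER_derived hc hmin hcl hinv hdistal hR,
      FiberSupport.FullMod.derived hT hc hmin hμn huniq hπc.measurable hcl hinv hdistal hmeas
        hdisint hfib hR hRfull⟩ (FiberSupport.derived_subset hR.closed)
  have hae : ∀ᵐ y ∂ν, μy y (π ⁻¹' {y}) = 1 ∧
      ∀ x : X, π x = y → ∀ U : Set X, IsOpen U → x ∈ U → 0 < μy y U := by
    filter_upwards [hfiber, hRfull] with y hy hyR
    refine ⟨hy, fun x hx U hU hxU => ?_⟩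
    obtain ⟨c, hcs, hxc⟩ := hyR x hx
    rw [← FiberSupport.eq_of_mem_of_derived_eq hc hdistal hR hder hxc] at hcs
    exact (Measure.mem_support_iff_forall x).1 hcs U (hU.mem_nhds hxU)
  refine ⟨{y | μy y (π ⁻¹' {y}) = 1 ∧
    ∀ x : X, π x = y → ∀ U : Set X, IsOpen U → x ∈ U → 0 < μy y U}, ?_, fun y hy => hy⟩
  rw [measure_congr (Filter.eventuallyEq_univ.2 hae), measure_univ]
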